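/- Let Γ_n = P_n × P_3 × P_2 and let X_n be the induced subgraph of Γ_n obtained by deleting the three vertices (n,1,1), (n,2,2), (n,3,1). Then for every k ≥ 1 the independence complex I(X_{2k}) is homotopy equivalent to the sphere S^{3k−1}, and for every k ≥ 0 the independence complex I(X_{2k+1}) is contractible. -/

import Mathlib

open SimpleGraph

/-- An abstract simplicial complex on the underlying vertex set `V`. -/
structure Cplx (V : Type) where
  faces : Finset V → Prop
  down_closed : ∀ ⦃σ τ : Finset V⦄, σ ⊆ τ → faces τ → faces σ

/-- The independence complex of a graph: the faces are the independent sets. -/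
def indepCpx {V : Type} (G : SimpleGraph V) : Cplx V where
  faces σ := ∀ u ∈ σ, ∀ v ∈ σ, ¬ G.Adj u v
  down_closed := fun _ _ hst h u hu v hv => h u (hst hu) v (hst hv)

open Classical in
/-- The geometric realization of a simplicial complex, as a subspace of `V → ℝ`. -/
def Cplx.space {V : Type} [Fintype V] (K : Cplx V) : Type :=
  {f : V → ℝ // (∑ v, f v = 1) ∧ (∀ v, 0 ≤ f v) ∧
    K.faces (Finset.univ.filter fun v => f v ≠ 0)}

instance {V : Type} [Fintype V] (K : Cplx V) : TopologicalSpace K.space :=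
  instTopologicalSpaceSubtype

/-- The vertex set of the grid graph `P_n × P_3 × P_2`. -/
abbrev GV (n : ℕ) : Type := Fin n × Fin 3 × Fin 2

/-- The grid graph `Γ_n = P_n × P_3 × P_2` (cartesian product of paths). -/
def Gam (n : ℕ) : SimpleGraph (GV n) :=
  (pathGraph n).boxProd ((pathGraph 3).boxProd (pathGraph 2))

/-- The graph `X_{m+1}`: the induced subgraph of `Γ_{m+1} = P_{m+1} × P_3 × P_2`
obtained by deleting the vertices `(m+1,1,1)`, `(m+1,2,2)` and `(m+1,3,1)`
(in the 0-based indexing below: `(m,0,0)`, `(m,1,1)` and `(m,2,0)`). -/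
abbrev Xset (m : ℕ) : Set (GV (m + 1)) :=
  {x | x ≠ (Fin.last m, 0, 0) ∧ x ≠ (Fin.last m, 1, 1) ∧ x ≠ (Fin.last m, 2, 0)}

def Xg (m : ℕ) : SimpleGraph ↥(Xset m) := (Gam (m + 1)).induce (Xset m)

/-!
If every neighbour of `y` is a neighbour of `x`, then replacing `x` by `y` is contiguous to the
identity of the independence complex, so `x` may be deleted without changing the homotopy type. More
generally, all vertices outside a set `T` may be deleted at once if each of them is dominated in
this way by a vertex of `T`.

Let `H` be a finite bipartite graph without isolated vertices, and delete one colour class from the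
first layer of `P_n × H`. Each vertex left in the first layer now has a single neighbour, its copy
in the second layer. By domination, the second layer may be reduced to the colour class retained in
the first one, and the third layer to the opposite class; the third layer is then trimmed as the
first one was, and the reduction can be repeated. In the end the layers `2q` and `2q + 1`, counted
from `0`, form a perfect matching, and there are no edges between different such pairs of layers.
The independence complex of a matching with `d` edges is the boundary of the `d`-dimensional
cross-polytope, a sphere `S^{d-1}`. For odd `n` the last layer has no partner, so its vertices are
isolated and the independence complex is a cone.

For `H = P_3 × P_2` each colour class has three vertices, so `n = 2k` gives `d = 3k`.
-/

open scoped ContinuousMap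

namespace Cplx

variable {U V W : Type} {K : Cplx V} {L : Cplx W} {M : Cplx U} {φ ψ : V → W}

open Classical in
/-- Simplicial maps: vertex maps carrying faces to faces, possibly collapsing them. -/
def IsSimplicialMap (K : Cplx V) (L : Cplx W) (φ : V → W) : Prop :=
  ∀ ⦃σ : Finset V⦄, K.faces σ → L.faces (σ.image φ)

open Classical in
/-- Contiguity of simplicial maps: the images of each face lie in a common face. -/
def Contiguous (K : Cplx V) (L : Cplx W) (φ ψ : V → W) : Prop :=
  ∀ ⦃σ : Finset V⦄, K.faces σ → L.faces (σ.image φ ∪ σ.image ψ)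

open Classical in
theorem Contiguous.left (h : Contiguous K L φ ψ) : IsSimplicialMap K L φ := fun _ hσ =>
  L.down_closed Finset.subset_union_left (h hσ)

open Classical in
theorem Contiguous.right (h : Contiguous K L φ ψ) : IsSimplicialMap K L ψ := fun _ hσ =>
  L.down_closed Finset.subset_union_right (h hσ)

variable [Fintype U] [Fintype V] [Fintype W]

open Classical in
/-- The vertices at which the barycentric coordinates `f` do not vanish, as in `Cplx.space`. -/
noncomputable abbrev support (f : V → ℝ) : Finset V :=
  Finset.univ.filter fun v => f v ≠ 0

/-- The inclusion of the realization of a complex in the full simplex on its vertices. -/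
def toStdSimplex (x : K.space) : stdSimplex ℝ V :=
  ⟨x.1, x.2.2.1, x.2.1⟩

theorem toStdSimplex_injective : Function.Injective (toStdSimplex : K.space → stdSimplex ℝ V) :=
  fun _ _ h => Subtype.ext (congrArg DFunLike.coe h :)

theorem continuous_toStdSimplex : Continuous (toStdSimplex : K.space → stdSimplex ℝ V) :=
  continuous_subtype_val.subtype_mk _

theorem faces_support (x : K.space) : K.faces (support (toStdSimplex x)) :=
  x.2.2.2

/-- The point of the realization with the given barycentric coordinates. -/
def space.mk (s : stdSimplex ℝ V) (hs : K.faces (support s)) : K.space :=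
  ⟨s, s.2.2, s.2.1, hs⟩

theorem toStdSimplex_mk (s : stdSimplex ℝ V) (hs : K.faces (support s)) :
    toStdSimplex (space.mk s hs) = s :=
  rfl

open Classical in
theorem support_stdSimplex_map_subset (φ : V → W) (s : stdSimplex ℝ V) :
    support (stdSimplex.map φ s) ⊆ (support s).image φ := by
  intro w hw
  rw [Finset.mem_filter_univ, stdSimplex.map_coe, FunOnFinite.linearMap_apply_apply] at hw
  obtain ⟨v, hv, hsv⟩ := Finset.exists_ne_zero_of_sum_ne_zero hw
  exact Finset.mem_image.2 ⟨v, (Finset.mem_filter_univ v).2 hsv, (Finset.mem_filter_univ v).1 hv⟩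

/-- The map of realizations induced by a simplicial map. -/
noncomputable def IsSimplicialMap.map (hφ : IsSimplicialMap K L φ) : C(K.space, L.space) where
  toFun x := space.mk (stdSimplex.map φ (toStdSimplex x)) <|
    L.down_closed (support_stdSimplex_map_subset φ _) (hφ (faces_support x))
  continuous_toFun := (continuous_subtype_val.comp <|
    (stdSimplex.continuous_map φ).comp continuous_toStdSimplex).subtype_mk _

theorem IsSimplicialMap.toStdSimplex_map (hφ : IsSimplicialMap K L φ) (x : K.space) :
    toStdSimplex (hφ.map x) = stdSimplex.map φ (toStdSimplex x) :=
  rfl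

theorem IsSimplicialMap.map_id (h : IsSimplicialMap K K id) : h.map = ContinuousMap.id K.space :=
  ContinuousMap.ext fun x => toStdSimplex_injective (stdSimplex.map_id_apply (toStdSimplex x))

theorem IsSimplicialMap.map_comp {ψ : W → U} (hψ : IsSimplicialMap L M ψ)
    (hφ : IsSimplicialMap K L φ) (hψφ : IsSimplicialMap K M (ψ ∘ φ)) :
    hψφ.map = hψ.map.comp hφ.map :=
  ContinuousMap.ext fun x =>
    toStdSimplex_injective (stdSimplex.map_comp_apply φ ψ (toStdSimplex x)).symm

theorem Contiguous.homotopic (h : Contiguous K L φ ψ) :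
    h.left.map.Homotopic h.right.map := by
  classical
  let segment (t : ℝ) (x : K.space) : W → ℝ := AffineMap.lineMap
    (toStdSimplex (h.left.map x) : W → ℝ) (toStdSimplex (h.right.map x) : W → ℝ) t
  have segment_mem (t : unitInterval) (x : K.space) : segment t x ∈ stdSimplex ℝ W :=
    (convex_stdSimplex ℝ W).lineMap_mem (toStdSimplex (h.left.map x)).2
      (toStdSimplex (h.right.map x)).2 t.2
  have support_segment (t : unitInterval) (x : K.space) :
      support (segment t x) ⊆
        (support (toStdSimplex x)).image φ ∪ (support (toStdSimplex x)).image ψ := by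
    refine subset_trans (fun w hw => ?_) (Finset.union_subset_union
      (support_stdSimplex_map_subset φ (toStdSimplex x))
      (support_stdSimplex_map_subset ψ (toStdSimplex x)))
    simp only [Finset.mem_union, Finset.mem_filter_univ] at hw ⊢
    contrapose! hw
    simp only [segment, AffineMap.lineMap_apply_module, IsSimplicialMap.toStdSimplex_map,
      Pi.add_apply, Pi.smul_apply, hw.1, hw.2, smul_zero, add_zero]
  have continuous_coords : Continuous fun y : L.space => (toStdSimplex y : W → ℝ) :=
    continuous_subtype_val
  have continuous_segment : Continuous fun p : unitInterval × K.space => segment p.1 p.2 :=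
    (continuous_coords.comp (h.left.map.continuous.comp continuous_snd)).lineMap
      (continuous_coords.comp (h.right.map.continuous.comp continuous_snd))
      (continuous_subtype_val.comp continuous_fst)
  exact ⟨{
    toFun p := space.mk ⟨segment p.1 p.2, segment_mem p.1 p.2⟩
      (L.down_closed (support_segment p.1 p.2) (h (faces_support p.2)))
    continuous_toFun := continuous_segment.subtype_mk _
    map_zero_left _ := Subtype.ext (AffineMap.lineMap_apply_zero _ _)
    map_one_left _ := Subtype.ext (AffineMap.lineMap_apply_one _ _) }⟩

/-- A strong homotopy equivalence: simplicial maps inverse to each other up to contiguity. -/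
noncomputable def homotopyEquivOfContiguous {ψ : W → V}
    (hφ : IsSimplicialMap K L φ) (hψ : IsSimplicialMap L K ψ)
    (hψφ : Contiguous K K (ψ ∘ φ) id) (hφψ : Contiguous L L (φ ∘ ψ) id) :
    K.space ≃ₕ L.space where
  toFun := hφ.map
  invFun := hψ.map
  left_inv := by
    rw [← hψ.map_comp hφ hψφ.left, ← hψφ.right.map_id]
    exact hψφ.homotopic
  right_inv := by
    rw [← hφ.map_comp hψ hφψ.left, ← hφψ.right.map_id]
    exact hφψ.homotopic

open Classical in
theorem contractibleSpace_of_cone (v : V) (hv : K.faces {v})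
    (h : ∀ ⦃σ⦄, K.faces σ → K.faces (insert v σ)) : ContractibleSpace K.space := by
  have hcont : Contiguous K K (fun _ => v) id := fun σ hσ =>
    K.down_closed (fun w hw => by grind) (h hσ)
  let apex : K.space := space.mk (stdSimplex.vertex v) <|
    K.down_closed (fun w hw => by simpa [Pi.single_apply] using hw) hv
  have hconst : hcont.left.map = ContinuousMap.const _ apex := by
    refine ContinuousMap.ext fun x => toStdSimplex_injective (stdSimplex.ext (funext fun w => ?_))
    rw [IsSimplicialMap.toStdSimplex_map, stdSimplex.map_coe, FunOnFinite.linearMap_apply_apply,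
      ContinuousMap.const_apply, toStdSimplex_mk, stdSimplex.vertex_coe]
    obtain rfl | hw := eq_or_ne w v
    · simp
    · simp [hw, hw.symm]
  rw [contractible_iff_id_nullhomotopic]
  refine ⟨apex, ?_⟩
  rw [← hconst, ← hcont.right.map_id]
  exact hcont.homotopic.symm

end Cplx

namespace indepCpx

open Cplx

variable {V W : Type} {G : SimpleGraph V} {H : SimpleGraph W}

theorem isSimplicialMap {φ : V → W} (hφ : ∀ u v, H.Adj (φ u) (φ v) → G.Adj u v) :
    IsSimplicialMap (indepCpx G) (indepCpx H) φ := by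
  intro σ hσ
  simp only [indepCpx, Finset.forall_mem_image] at hσ ⊢
  exact fun u hu v hv h => hσ u hu v hv (hφ u v h)

theorem contiguous_id {φ : V → V} (hφ : ∀ u v, G.Adj (φ u) v → G.Adj u v) :
    Contiguous (indepCpx G) (indepCpx G) φ id := by
  have hφφ (u v : V) (h : G.Adj (φ u) (φ v)) : G.Adj u v := (hφ v u (hφ u _ h).symm).symm
  intro σ hσ
  simp only [indepCpx, Finset.mem_union, Finset.mem_image, id_eq, exists_eq_right] at hσ ⊢
  rintro _ (⟨u, hu, rfl⟩ | hu) _ (⟨v, hv, rfl⟩ | hv) h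
  · exact hσ u hu v hv (hφφ u v h)
  · exact hσ u hu _ hv (hφ u _ h)
  · exact hσ v hv _ hu (hφ v _ h.symm)
  · exact hσ _ hu _ hv h

theorem nonempty_homotopyEquiv [Fintype V] [Fintype W] (φ : V → W) (ψ : W → V)
    (hφ : ∀ u v, H.Adj (φ u) (φ v) → G.Adj u v) (hψ : ∀ u v, G.Adj (ψ u) (ψ v) → H.Adj u v)
    (hψφ : ∀ u v, G.Adj (ψ (φ u)) v → G.Adj u v) (hφψ : ∀ u v, H.Adj (φ (ψ u)) v → H.Adj u v) :
    Nonempty ((indepCpx G).space ≃ₕ (indepCpx H).space) :=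
  ⟨homotopyEquivOfContiguous (isSimplicialMap hφ) (isSimplicialMap hψ) (contiguous_id hψφ)
    (contiguous_id hφψ)⟩

theorem nonempty_homotopyEquiv_of_iso [Fintype V] [Fintype W] (e : G ≃g H) :
    Nonempty ((indepCpx G).space ≃ₕ (indepCpx H).space) :=
  nonempty_homotopyEquiv e e.symm (fun _ _ => e.map_adj_iff.1) (fun _ _ => e.symm.map_adj_iff.1)
    (fun _ _ h => by rwa [e.symm_apply_apply] at h) (fun _ _ h => by rwa [e.apply_symm_apply] at h)

theorem nonempty_homotopyEquiv_induce_of_dominated {S T : Set V} [Fintype S] [Fintype T]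
    (hTS : T ⊆ S) (h : ∀ x ∈ S, ∃ y ∈ T, ∀ z ∈ S, G.Adj y z → G.Adj x z) :
    Nonempty ((indepCpx (G.induce S)).space ≃ₕ (indepCpx (G.induce T)).space) := by
  choose! f hfT hf using h
  have hf' (x y : V) (hx : x ∈ S) (hy : y ∈ S) (h : G.Adj (f x) (f y)) : G.Adj x y :=
    (hf y hy x hx (hf x hx _ (hTS (hfT y hy)) h).symm).symm
  exact nonempty_homotopyEquiv (Set.MapsTo.restrict f S T hfT) (Set.inclusion hTS)
    (fun x y => hf' x y x.2 y.2) (fun _ _ => id) (fun x z => hf x x.2 z z.2)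
    (fun x z => hf x (hTS x.2) z (hTS z.2))

theorem contractibleSpace_of_isolated [Fintype V] {v : V} (hv : ∀ w, ¬ G.Adj v w) :
    ContractibleSpace (indepCpx G).space := by
  classical
  refine contractibleSpace_of_cone v (fun u hu w _ => ?_) fun σ hσ u hu w hw h => ?_
  · rw [Finset.mem_singleton.1 hu]
    exact hv w
  · rw [Finset.mem_insert] at hu hw
    obtain rfl | hu := hu
    · exact hv w h
    obtain rfl | hw := hw
    · exact hv u h.symm
    exact hσ u hu w hw h

theorem nonempty_homotopyEquiv_induce_of_eq {S T : Set V} [Fintype S] [Fintype T] (h : S = T) :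
    Nonempty ((indepCpx (G.induce S)).space ≃ₕ (indepCpx (G.induce T)).space) :=
  nonempty_homotopyEquiv_induce_of_dominated h.ge fun x hx => ⟨x, h ▸ hx, fun _ _ => id⟩

end indepCpx

open NormedSpace in
theorem normalize_map_normalize {E F : Type*} [NormedAddCommGroup E] [NormedSpace ℝ E]
    [NormedAddCommGroup F] [NormedSpace ℝ F] (f : E →ₗ[ℝ] F) (x : E) :
    normalize (f (normalize x)) = normalize (f x) := by
  obtain rfl | hx := eq_or_ne x 0
  · simp
  · rw [NormedSpace.normalize.eq_def x, map_smul,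
      normalize_smul_of_pos (inv_pos.2 (norm_pos_iff.2 hx))]

open NormedSpace in
/-- The homeomorphism of unit spheres obtained from a linear equivalence by radial projection. -/
noncomputable def unitSphereHomeomorph {E F : Type*} [NormedAddCommGroup E] [NormedSpace ℝ E]
    [NormedAddCommGroup F] [NormedSpace ℝ F] (e : E ≃L[ℝ] F) :
    Metric.sphere (0 : E) 1 ≃ₜ Metric.sphere (0 : F) 1 where
  toFun x := ⟨normalize (e x), by simp [ne_zero_of_mem_unit_sphere x]⟩
  invFun y := ⟨normalize (e.symm y), by simp [ne_zero_of_mem_unit_sphere y]⟩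
  left_inv x := Subtype.ext <| by
    refine (normalize_map_normalize e.symm.toLinearMap (e x)).trans ?_
    simp [normalize_eq_self_of_norm_eq_one]
  right_inv y := Subtype.ext <| by
    refine (normalize_map_normalize e.toLinearMap (e.symm y)).trans ?_
    simp [normalize_eq_self_of_norm_eq_one]
  continuous_toFun := by
    unfold NormedSpace.normalize
    fun_prop (disch := simp [ne_zero_of_mem_unit_sphere])
  continuous_invFun := by
    unfold NormedSpace.normalize
    fun_prop (disch := simp [ne_zero_of_mem_unit_sphere])

namespace indepCpx

open Cplx

theorem eq_zero_or_eq_zero_of_adj {V : Type} [Fintype V] {G : SimpleGraph V}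
    (x : (indepCpx G).space) {u v : V} (h : G.Adj u v) :
    toStdSimplex x u = 0 ∨ toStdSimplex x v = 0 := by
  by_contra! hx
  exact faces_support x u ((Finset.mem_filter_univ u).2 hx.1) v
    ((Finset.mem_filter_univ v).2 hx.2) h

variable {ι : Type}

/-- The graph consisting of disjoint edges indexed by `ι`. -/
abbrev matching (ι : Type) : SimpleGraph (ι × Bool) := ⊥ □ ⊤

theorem matching_adj {a b : ι × Bool} :
    (matching ι).Adj a b ↔ a.1 = b.1 ∧ a.2 ≠ b.2 := by
  simp [boxProd_adj, and_comm]

variable [Fintype ι]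

/-- The point of the boundary of the cross-polytope with axes `ι`, the unit sphere of the
`ℓ¹`-norm, that corresponds to a point of the independence complex of a perfect matching: the ends
`(i, true)` and `(i, false)` of the `i`-th edge go to the two vertices on the `i`-th axis. -/
noncomputable def toCrossPolytope
    (x : (indepCpx (matching ι)).space) :
    Metric.sphere (0 : PiLp 1 fun _ : ι => ℝ) 1 :=
  ⟨WithLp.toLp 1 fun i => toStdSimplex x (i, true) - toStdSimplex x (i, false), by
    rw [mem_sphere_zero_iff_norm, PiLp.norm_eq_of_L1, ← stdSimplex.sum_eq_one (toStdSimplex x),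
      Fintype.sum_prod_type]
    refine Finset.sum_congr rfl fun i _ => ?_
    have hi : (matching ι).Adj (i, true) (i, false) := by simp
    obtain h | h := eq_zero_or_eq_zero_of_adj x hi <;> simp [h, abs_of_nonneg]⟩

/-- The barycentric coordinates of a point of the boundary of the cross-polytope: the positive and
negative parts of its Cartesian coordinates. -/
noncomputable def signParts (y : Metric.sphere (0 : PiLp 1 fun _ : ι => ℝ) 1) :
    stdSimplex ℝ (ι × Bool) :=
  ⟨fun v => if v.2 then (y.1 v.1)⁺ else (y.1 v.1)⁻,
    fun v => by beta_reduce; split_ifs; exacts [posPart_nonneg _, negPart_nonneg _], by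
      have hy := PiLp.norm_eq_of_L1 y.1
      rw [norm_eq_of_mem_sphere y] at hy
      simpa [Fintype.sum_prod_type, posPart_add_negPart] using hy.symm⟩

theorem signParts_true (y : Metric.sphere (0 : PiLp 1 fun _ : ι => ℝ) 1) (i : ι) :
    signParts y (i, true) = (y.1 i)⁺ :=
  rfl

theorem signParts_false (y : Metric.sphere (0 : PiLp 1 fun _ : ι => ℝ) 1) (i : ι) :
    signParts y (i, false) = (y.1 i)⁻ :=
  rfl

theorem faces_support_signParts (y : Metric.sphere (0 : PiLp 1 fun _ : ι => ℝ) 1) :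
    (indepCpx (matching ι)).faces (support (signParts y)) := by
  rintro ⟨i, s⟩ hs ⟨j, t⟩ ht h
  obtain ⟨rfl : i = j, hst : s ≠ t⟩ := matching_adj.1 h
  rw [Finset.mem_filter_univ] at hs ht
  have hi : signParts y (i, true) = 0 ∨ signParts y (i, false) = 0 :=
    (le_total (y.1 i) 0).imp posPart_eq_zero.2 negPart_eq_zero.2
  cases s <;> cases t <;> tauto

/-- The independence complex of a perfect matching is the boundary of a cross-polytope. -/
noncomputable def matchingHomeomorph :
    (indepCpx (matching ι)).space ≃ₜ
      Metric.sphere (0 : PiLp 1 fun _ : ι => ℝ) 1 where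
  toFun := toCrossPolytope
  invFun y := space.mk (signParts y) (faces_support_signParts y)
  left_inv x := toStdSimplex_injective <| stdSimplex.ext <| funext fun ⟨i, s⟩ => by
    have hi : (matching ι).Adj (i, true) (i, false) := by simp
    obtain h | h := eq_zero_or_eq_zero_of_adj x hi <;> cases s <;>
      simp [toCrossPolytope, toStdSimplex_mk, signParts_true, signParts_false, h]
  right_inv y := Subtype.ext <| PiLp.ext fun i => posPart_sub_negPart (y.1 i)
  continuous_toFun := by
    have hcoord (v : ι × Bool) :
        Continuous fun x : (indepCpx (matching ι)).space => toStdSimplex x v :=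
      (continuous_apply v).comp continuous_subtype_val
    refine Continuous.subtype_mk ?_ _
    fun_prop
  continuous_invFun := by
    refine Continuous.subtype_mk (continuous_pi fun ⟨i, s⟩ => ?_) _
    cases s <;> simp only [signParts_true, signParts_false] <;> fun_prop

theorem nonempty_homotopyEquiv_sphere_of_matching {d : ℕ} (hd : Fintype.card ι = d) :
    Nonempty ((indepCpx (matching ι)).space ≃ₕ
      Metric.sphere (0 : EuclideanSpace ℝ (Fin d)) 1) := by
  have hfinrank : Module.finrank ℝ (PiLp 1 fun _ : ι => ℝ) =
      Module.finrank ℝ (EuclideanSpace ℝ (Fin d)) := by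
    rw [(WithLp.linearEquiv 1 ℝ (ι → ℝ)).finrank_eq, Module.finrank_fintype_fun_eq_card, hd,
      finrank_euclideanSpace_fin]
  exact ⟨(matchingHomeomorph.trans <|
    unitSphereHomeomorph (ContinuousLinearEquiv.ofFinrankEq hfinrank)).toHomotopyEquiv⟩

end indepCpx

section Grid

variable {V : Type} {H : SimpleGraph V} (c : H.Coloring Bool) (n : ℕ)

/-- The vertices of the grid `P_n × H` left after deleting the class of colour `true` from the
first layer. -/
abbrev trimmedGrid : Set (Fin n × V) :=
  {x | (x.1 : ℕ) = 0 → c x.2 = false}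

/-- The vertices of `P_n × H` left after the first `2t + 1` layers have been reduced to one colour
class each, the layers `2q` and `2q + 1` being reduced to the class of colour `q mod 2`. -/
abbrev gridStage (t : ℕ) : Set (Fin n × V) :=
  {x | (x.1 : ℕ) ≤ 2 * t → c x.2 = (x.1 / 2 : ℕ).bodd}

/-- The vertices of `P_n × H` left after all layers have been reduced to one colour class. -/
abbrev gridCore : Set (Fin n × V) :=
  {x | c x.2 = (x.1 / 2 : ℕ).bodd}

variable {c n}

theorem pathGraph_boxProd_adj {x y : Fin n × V} :
    (pathGraph n □ H).Adj x y ↔ ((x.1 : ℕ) + 1 = y.1 ∨ (y.1 : ℕ) + 1 = x.1) ∧ x.2 = y.2 ∨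
      H.Adj x.2 y.2 ∧ (x.1 : ℕ) = y.1 := by
  rw [boxProd_adj, pathGraph_adj, Fin.ext_iff]

theorem pathGraph_boxProd_adj_rev {x y : Fin n × V} :
    (pathGraph n □ H).Adj (x.1.rev, x.2) (y.1.rev, y.2) ↔ (pathGraph n □ H).Adj x y := by
  simp only [pathGraph_boxProd_adj, Fin.val_rev]
  refine or_congr (and_congr_left' ?_) (and_congr_right' ?_) <;> omega

theorem gridStage_succ_subset (t : ℕ) : gridStage c n (t + 1) ⊆ gridStage c n t :=
  fun _ hx hxt => hx (by omega)

theorem eq_of_adj_of_mem_gridStage {t : ℕ} {y z : Fin n × V} (hyt : (y.1 : ℕ) = 2 * t)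
    (hy : y ∈ gridStage c n t) (hz : z ∈ gridStage c n t) (h : (pathGraph n □ H).Adj y z) :
    (z.1 : ℕ) = 2 * t + 1 ∧ z.2 = y.2 := by
  have hcy : c y.2 = t.bodd := by simpa [hyt] using hy hyt.le
  rw [pathGraph_boxProd_adj] at h
  obtain ⟨h | h, hyz⟩ | ⟨h, hyz⟩ := h
  · exact ⟨by omega, hyz.symm⟩
  · have hcz : c y.2 = (z.1 / 2 : ℕ).bodd := hyz ▸ hz (by omega)
    have ht : t = z.1 / 2 + 1 := by omega
    simp [hcz, ht] at hcy
  · have hcz : c z.2 = t.bodd := by simpa [← hyz, hyt] using hz (by omega)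
    exact absurd (hcy.trans hcz.symm) (c.valid h)

theorem exists_mem_gridStage_succ_dominating (hH : ∀ v, ∃ w, H.Adj v w) (t : ℕ) {x : Fin n × V}
    (hx : x ∈ gridStage c n t) :
    ∃ y ∈ gridStage c n (t + 1), ∀ z ∈ gridStage c n t,
      (pathGraph n □ H).Adj y z → (pathGraph n □ H).Adj x z := by
  by_cases hxt : x ∈ gridStage c n (t + 1)
  · exact ⟨x, hxt, fun _ _ => id⟩
  have hxt' : (x.1 : ℕ) ≤ 2 * (t + 1) ∧ c x.2 ≠ (x.1 / 2 : ℕ).bodd := by simpa using hxt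
  have htx : 2 * t < x.1 := by
    by_contra! h
    exact hxt'.2 (hx h)
  suffices ∃ w, c w = t.bodd ∧ ∀ z : Fin n × V, (z.1 : ℕ) = 2 * t + 1 → z.2 = w →
      (pathGraph n □ H).Adj x z by
    obtain ⟨w, hcw, hw⟩ := this
    have hy (s : ℕ) : ((⟨2 * t, htx.trans x.1.isLt⟩, w) : Fin n × V) ∈ gridStage c n s := by
      simp [hcw]
    refine ⟨_, hy (t + 1), fun z hz hyz => ?_⟩
    obtain ⟨hz₁, hz₂⟩ := eq_of_adj_of_mem_gridStage rfl (hy t) hz hyz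
    exact hw z hz₁ hz₂
  obtain hx₁ | hx₁ : (x.1 : ℕ) = 2 * t + 1 ∨ (x.1 : ℕ) = 2 * (t + 1) := by omega
  · obtain ⟨w, hw⟩ := hH x.2
    have hdiv : (2 * t + 1) / 2 = t := by omega
    have hcx : c x.2 ≠ t.bodd := by simpa [hx₁, hdiv] using hxt'.2
    have hcw : c w = t.bodd :=
      (Bool.eq_not.2 (c.valid hw).symm).trans (Bool.eq_not.2 hcx.symm).symm
    exact ⟨w, hcw, fun z hz₁ hz₂ => pathGraph_boxProd_adj.2 (.inr ⟨hz₂ ▸ hw, by omega⟩)⟩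
  · have hcx : c x.2 = t.bodd := by simpa [hx₁] using hxt'.2
    exact ⟨x.2, hcx, fun z hz₁ hz₂ => pathGraph_boxProd_adj.2 (.inl ⟨by omega, hz₂.symm⟩)⟩

theorem adj_iff_of_mem_gridCore {x y : Fin n × V} (hx : x ∈ gridCore c n) (hy : y ∈ gridCore c n) :
    (pathGraph n □ H).Adj x y ↔ ((x.1 / 2 : ℕ) = y.1 / 2 ∧ (x.1 : ℕ) ≠ y.1) ∧ x.2 = y.2 := by
  rw [pathGraph_boxProd_adj]
  constructor
  · rintro (⟨h, hxy⟩ | ⟨h, hxy⟩)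
    · have hbodd : (x.1 / 2 : ℕ).bodd = (y.1 / 2 : ℕ).bodd := by rw [← hx, ← hy, hxy]
      have hdiv : (x.1 / 2 : ℕ) ≠ y.1 / 2 + 1 ∧ (y.1 / 2 : ℕ) ≠ x.1 / 2 + 1 := by
        constructor <;> (intro hsucc; simp [hsucc] at hbodd)
      exact ⟨by omega, hxy⟩
    · exact absurd (hx.trans (hxy ▸ hy.symm)) (c.valid h)
  · rintro ⟨h, hxy⟩
    exact .inl ⟨by omega, hxy⟩

variable (c n)

theorem gridStage_zero : gridStage c n 0 = trimmedGrid c n := by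
  ext x
  simp +contextual [gridStage, trimmedGrid]

theorem gridStage_self : gridStage c n n = gridCore c n := by
  ext x
  exact forall_prop_of_true (by omega)

theorem nonempty_homotopyEquiv_gridCore [Fintype V] (hH : ∀ v, ∃ w, H.Adj v w) :
    Nonempty ((indepCpx ((pathGraph n □ H).induce (trimmedGrid c n))).space ≃ₕ
      (indepCpx ((pathGraph n □ H).induce (gridCore c n))).space) := by
  have stages (t : ℕ) : Nonempty ((indepCpx ((pathGraph n □ H).induce (gridStage c n 0))).space ≃ₕ
      (indepCpx ((pathGraph n □ H).induce (gridStage c n t))).space) := by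
    induction t with
    | zero => exact ⟨.refl _⟩
    | succ t ih =>
      obtain ⟨e⟩ := ih
      obtain ⟨f⟩ := indepCpx.nonempty_homotopyEquiv_induce_of_dominated (gridStage_succ_subset t)
        fun x hx => exists_mem_gridStage_succ_dominating hH t hx
      exact ⟨e.trans f⟩
  obtain ⟨e⟩ := indepCpx.nonempty_homotopyEquiv_induce_of_eq (gridStage_zero c n).symm
  obtain ⟨f⟩ := stages n
  obtain ⟨g⟩ := indepCpx.nonempty_homotopyEquiv_induce_of_eq (gridStage_self c n)
  exact ⟨(e.trans f).trans g⟩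

theorem exists_color_eq [Nonempty V] (hH : ∀ v, ∃ w, H.Adj v w) (b : Bool) : ∃ v, c v = b := by
  obtain ⟨v⟩ := ‹Nonempty V›
  obtain ⟨w, hw⟩ := hH v
  have := c.valid hw
  by_contra! h
  exact this ((Bool.eq_not.2 (h v)).trans (Bool.eq_not.2 (h w)).symm)

theorem contractibleSpace_gridCore [Fintype V] [Nonempty V] (hH : ∀ v, ∃ w, H.Adj v w) (k : ℕ) :
    ContractibleSpace (indepCpx ((pathGraph (2 * k + 1) □ H).induce
      (gridCore c (2 * k + 1)))).space := by
  obtain ⟨v, hv⟩ := exists_color_eq c hH k.bodd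
  have hlast : (Fin.last (2 * k), v) ∈ gridCore c (2 * k + 1) := by simpa
  refine indepCpx.contractibleSpace_of_isolated (v := ⟨_, hlast⟩) fun x hx => ?_
  obtain ⟨⟨hdiv, hne⟩, -⟩ := (adj_iff_of_mem_gridCore hlast x.2).1 hx
  rw [Fin.val_last] at hdiv hne
  omega

/-- The inclusion of the disjoint edges that make up the core of `P_{2k} × H`: the edge indexed by
`(q, v)` joins the copies of `v` in the layers `2q` and `2q + 1`. -/
def gridCoreEdges (k : ℕ) (a : (Σ q : Fin k, {v // c v = (q : ℕ).bodd}) × Bool) :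
    gridCore c (2 * k) :=
  ⟨(⟨2 * a.1.1 + a.2.toNat, by have := a.2.toNat_lt; omega⟩, a.1.2), by
    have hdiv : (2 * a.1.1 + a.2.toNat) / 2 = (a.1.1 : ℕ) := by have := a.2.toNat_lt; omega
    simpa [hdiv] using a.1.2.2⟩

theorem gridCoreEdges_bijective (k : ℕ) : Function.Bijective (gridCoreEdges c k) := by
  constructor
  · rintro ⟨⟨q, v, hv⟩, s⟩ ⟨⟨r, w, hw⟩, t⟩ h
    simp only [gridCoreEdges, Subtype.mk.injEq, Prod.mk.injEq, Fin.mk.injEq] at h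
    obtain ⟨h, rfl⟩ := h
    obtain rfl : q = r := by have := s.toNat_lt; have := t.toNat_lt; omega
    obtain rfl : s = t := by cases s <;> cases t <;> simp_all
    rfl
  · rintro ⟨⟨i, v⟩, hv⟩
    refine ⟨(⟨⟨i / 2, by omega⟩, v, hv⟩, (i : ℕ).bodd), ?_⟩
    simp only [gridCoreEdges, ← Nat.mod_two_of_bodd, Nat.div_add_mod]

theorem gridCoreEdges_adj_iff {k : ℕ} {a b : (Σ q : Fin k, {v // c v = (q : ℕ).bodd}) × Bool} :
    ((pathGraph (2 * k) □ H).induce (gridCore c (2 * k))).Adj (gridCoreEdges c k a)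
      (gridCoreEdges c k b) ↔ (indepCpx.matching _).Adj a b := by
  obtain ⟨⟨q, v, hv⟩, s⟩ := a
  obtain ⟨⟨r, w, hw⟩, t⟩ := b
  have hs := s.toNat_lt
  have ht := t.toNat_lt
  refine (adj_iff_of_mem_gridCore (Subtype.prop _) (Subtype.prop _)).trans
    (Iff.trans ⟨?_, ?_⟩ indepCpx.matching_adj.symm)
  · rintro ⟨⟨hdiv, hne⟩, rfl : v = w⟩
    simp only [gridCoreEdges] at hdiv hne
    obtain rfl : q = r := by omega
    exact ⟨rfl, fun hst : s = t => hne (by rw [hst])⟩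
  · rintro ⟨h, hst⟩
    obtain ⟨rfl, h⟩ := Sigma.mk.inj h
    obtain rfl : v = w := congrArg Subtype.val (eq_of_heq h)
    have hst' : s.toNat ≠ t.toNat := by cases s <;> cases t <;> simp_all
    refine ⟨⟨?_, ?_⟩, rfl⟩ <;> simp only [gridCoreEdges] <;> omega

/-- The core of `P_{2k} × H` is a disjoint union of edges. -/
noncomputable def gridCoreIso (k : ℕ) :
    indepCpx.matching (Σ q : Fin k, {v // c v = (q : ℕ).bodd}) ≃g
      (pathGraph (2 * k) □ H).induce (gridCore c (2 * k)) where
  toEquiv := .ofBijective _ (gridCoreEdges_bijective c k)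
  map_rel_iff' := gridCoreEdges_adj_iff c

/-- The number of edges of the core of `P_{2k} × H`: one for every pair of layers `2q`, `2q + 1`
and every vertex of colour `q mod 2`. -/
abbrev gridCoreSize [Fintype V] (k : ℕ) : ℕ :=
  ∑ q : Fin k, Fintype.card {v // c v = (q : ℕ).bodd}

theorem nonempty_homotopyEquiv_sphere_gridCore [Fintype V] (k : ℕ) :
    Nonempty ((indepCpx ((pathGraph (2 * k) □ H).induce (gridCore c (2 * k)))).space ≃ₕ
      Metric.sphere (0 : EuclideanSpace ℝ (Fin (gridCoreSize c k))) 1) := by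
  obtain ⟨e⟩ := indepCpx.nonempty_homotopyEquiv_of_iso (gridCoreIso c k)
  obtain ⟨f⟩ := indepCpx.nonempty_homotopyEquiv_sphere_of_matching
    (Fintype.card_sigma (α := fun q : Fin k => {v // c v = (q : ℕ).bodd}))
  exact ⟨e.symm.trans f⟩

theorem indep_X_homotopyEquiv_general [Fintype V] (hH : ∀ v, ∃ w, H.Adj v w) :
    (∀ k : ℕ, Nonempty (
      (indepCpx ((pathGraph (2 * k) □ H).induce (trimmedGrid c (2 * k)))).space ≃ₕ
        Metric.sphere (0 : EuclideanSpace ℝ (Fin (gridCoreSize c k))) 1)) ∧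
    (Nonempty V → ∀ k : ℕ, ContractibleSpace (indepCpx
      ((pathGraph (2 * k + 1) □ H).induce (trimmedGrid c (2 * k + 1)))).space) := by
  refine ⟨fun k => ?_, fun _ k => ?_⟩
  · obtain ⟨e⟩ := nonempty_homotopyEquiv_gridCore c (2 * k) hH
    obtain ⟨f⟩ := nonempty_homotopyEquiv_sphere_gridCore c k
    exact ⟨e.trans f⟩
  · obtain ⟨e⟩ := nonempty_homotopyEquiv_gridCore c (2 * k + 1) hH
    have := contractibleSpace_gridCore c hH k
    exact e.contractibleSpace

end Grid

/-- The proper 2-colouring of `P_3 × P_2` for which `(1,1)`, `(2,2)` and `(3,1)`, the vertices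
missing from the last layer of `X_n`, form the class of colour `true`. -/
def gridColoring : (pathGraph 3 □ pathGraph 2).Coloring Bool :=
  Coloring.mk (fun v => (v.1 + v.2 + 1 : ℕ).bodd) fun {v w} h => by
    rw [pathGraph_boxProd_adj, pathGraph_adj] at h
    obtain hvw | hvw : (w.1 + w.2 : ℕ) = (v.1 + v.2 : ℕ) + 1 ∨
        (v.1 + v.2 : ℕ) = (w.1 + w.2 : ℕ) + 1 := by omega
    all_goals simp [hvw]

theorem exists_adj_pathGraph_boxProd (v : Fin 3 × Fin 2) :
    ∃ w, (pathGraph 3 □ pathGraph 2).Adj v w :=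
  ⟨(v.1, v.2.rev), by
    refine boxProd_adj.2 (.inr ⟨?_, rfl⟩)
    rw [pathGraph_adj, Fin.val_rev]
    omega⟩

theorem card_gridColoring_eq (b : Bool) : Fintype.card {v // gridColoring v = b} = 3 := by
  cases b <;> rfl

theorem gridCoreSize_gridColoring (k : ℕ) : gridCoreSize gridColoring k = 3 * k := by
  simp [gridCoreSize, card_gridColoring_eq, mul_comm]

theorem mem_Xset_iff {m : ℕ} {x : GV (m + 1)} :
    x ∈ Xset m ↔ (x.1.rev, x.2) ∈ trimmedGrid gridColoring (m + 1) := by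
  have hcolor (v : Fin 3 × Fin 2) :
      gridColoring v = false ↔ v ≠ (0, 0) ∧ v ≠ (1, 1) ∧ v ≠ (2, 0) := by
    revert v
    decide
  obtain ⟨i, v⟩ := x
  have hi : (i.rev : ℕ) = 0 ↔ i = Fin.last m := by
    rw [Fin.val_eq_zero_iff, Fin.rev_eq_iff, Fin.rev_zero]
  simp only [Set.mem_ofPred_eq, hcolor, hi, ne_eq, Prod.mk.injEq]
  tauto

/-- The graph `X_{m+1}` is the trimmed grid over `P_3 × P_2` with the layers in reverse order. -/
def XgIso (m : ℕ) :
    Xg m ≃g (pathGraph (m + 1) □ (pathGraph 3 □ pathGraph 2)).induce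
      (trimmedGrid gridColoring (m + 1)) where
  toEquiv := (Fin.revPerm.prodCongr (.refl _)).subtypeEquiv fun _ => mem_Xset_iff
  map_rel_iff' := pathGraph_boxProd_adj_rev

/-- Lemma 6.2: the independence complex of `X_{2k}` is homotopy equivalent to
`S^{3k-1}`, and the independence complex of `X_{2k+1}` is contractible. -/
theorem indep_X_homotopyEquiv :
    (∀ k : ℕ, 1 ≤ k → Nonempty (ContinuousMap.HomotopyEquiv
      (indepCpx (Xg (2 * k - 1))).space
      (Metric.sphere (0 : EuclideanSpace ℝ (Fin (3 * k))) 1))) ∧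
    (∀ k : ℕ, ContractibleSpace (indepCpx (Xg (2 * k))).space) := by
  obtain ⟨hsphere, hcontractible⟩ :=
    indep_X_homotopyEquiv_general gridColoring exists_adj_pathGraph_boxProd
  refine ⟨fun k hk => ?_, fun k => ?_⟩
  · obtain ⟨k, rfl⟩ := Nat.exists_eq_add_of_le' hk
    obtain ⟨e⟩ := indepCpx.nonempty_homotopyEquiv_of_iso (XgIso (2 * (k + 1) - 1))
    obtain ⟨f⟩ := hsphere (k + 1)
    rw [gridCoreSize_gridColoring] at f
    exact ⟨e.trans f⟩
  · obtain ⟨e⟩ := indepCpx.nonempty_homotopyEquiv_of_iso (XgIso (2 * k))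
    have := hcontractible inferInstance k
    exact e.contractibleSpace
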